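/- Let G = (V, E, x) be a finite connected rooted graph with conductances λ ∈ (0,∞)^E, let yz ∈ E be an edge, let G* be the graph G with the edge yz removed, and let λ* be the restriction of λ to the edges of G* (if removing yz disconnects a vertex from the root, its variance under G* is set to +∞). Then for every vertex i ∈ V, Var^{IV-GFF}_{G,λ}[φ(i)] ≤ Var^{IV-GFF}_{G*,λ*}[φ(i)], and for every pair of vertices i,j ∈ V, Var^{IV-GFF}_{G,λ}[φ(i) − φ(j)] ≤ Var^{IV-GFF}_{G*,λ*}[φ(i) − φ(j)]. -/

import Mathlib

open scoped ENNReal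

noncomputable section

/-- The graph on `V` whose edges are the pairs of distinct vertices carrying a positive
conductance. -/
def supportGraph {V : Type*} (c : V → V → ℝ) : SimpleGraph V :=
  SimpleGraph.fromRel (fun a b => 0 < c a b)

/-- Configurations of the integer-valued Gaussian free field on the rooted graph with
conductances `c` and root `x`: integer-valued height functions vanishing at the root and
(by convention) outside the connected component of the root. -/
def GffConfig {V : Type*} (c : V → V → ℝ) (x : V) : Type _ :=
  {φ : V → ℤ // φ x = 0 ∧ ∀ v : V, ¬ (supportGraph c).Reachable x v → φ v = 0}

/-- Boltzmann weight `exp(−∑_{ij∈E} λ_{ij}(φ(i)−φ(j))²)` of a configuration (each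
unordered pair is counted once, whence the factor `1/2` in the ordered sum). -/
def gffWeight {V : Type*} [Fintype V] (c : V → V → ℝ) (φ : V → ℤ) : ℝ :=
  Real.exp (-((1 : ℝ) / 2 * ∑ i : V, ∑ j : V, c i j * ((φ i - φ j : ℤ) : ℝ) ^ 2))

/-- Partition function of the integer-valued Gaussian free field. -/
def gffZ {V : Type*} [Fintype V] (c : V → V → ℝ) (x : V) : ℝ :=
  ∑' φ : GffConfig c x, gffWeight c φ.val

/-- Variance of an observable `f` under the integer-valued Gaussian free field
(real-valued formula, meaningful on the connected component of the root). -/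
def gffRVar {V : Type*} [Fintype V] (c : V → V → ℝ) (x : V) (f : (V → ℤ) → ℝ) : ℝ :=
  (∑' φ : GffConfig c x, f φ.val ^ 2 * gffWeight c φ.val) / gffZ c x
    - ((∑' φ : GffConfig c x, f φ.val * gffWeight c φ.val) / gffZ c x) ^ 2

open scoped Classical in
/-- Variance of the height `φ(i)` under the integer-valued Gaussian free field, set to
`∞` when `i` is not connected to the root. -/
def gffVar1 {V : Type*} [Fintype V] (c : V → V → ℝ) (x : V) (i : V) : ℝ≥0∞ :=
  if (supportGraph c).Reachable x i then
    ENNReal.ofReal (gffRVar c x fun φ => ((φ i : ℤ) : ℝ))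
  else ⊤

open scoped Classical in
/-- Variance of the height difference `φ(i) − φ(j)` under the integer-valued Gaussian
free field, set to `∞` when `i` or `j` is not connected to the root. -/
def gffVar2 {V : Type*} [Fintype V] (c : V → V → ℝ) (x : V) (i j : V) : ℝ≥0∞ :=
  if (supportGraph c).Reachable x i ∧ (supportGraph c).Reachable x j then
    ENNReal.ofReal (gffRVar c x fun φ => ((φ i : ℤ) : ℝ) - ((φ j : ℤ) : ℝ))
  else ⊤

end

/-- The conductances obtained from `c` by deleting the edge `yz`. -/
noncomputable def deleteEdge {V : Type*} [DecidableEq V] (c : V → V → ℝ) (y z : V) :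
    V → V → ℝ :=
  fun a b => if (a = y ∧ b = z) ∨ (a = z ∧ b = y) then 0 else c a b


theorem aux_class_sq {A P : Type*} [DecidableEq P] (S : Finset A) (p : A → P) (g : A → ℝ) :
    0 ≤ ∑ a ∈ S, ∑ b ∈ S, if p a = p b then g a * g b else 0 := by
  classical
  have h : ∑ a ∈ S, ∑ b ∈ S, (if p a = p b then g a * g b else 0)
      = ∑ q ∈ S.image p, (∑ a ∈ S, if p a = q then g a else 0) ^ 2 := by
    simp_rw [sq, Finset.sum_mul_sum]
    rw [Finset.sum_comm]
    symm
    rw [Finset.sum_comm]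
    refine (Finset.sum_congr rfl fun a ha => ?_).trans Finset.sum_comm
    rw [Finset.sum_comm]
    refine Finset.sum_congr rfl fun b hb => ?_
    rw [Finset.sum_eq_single (p a)]
    · by_cases h : p a = p b
      · simp [h]
      · simp [h, Ne.symm h]
    · intro q _ hq
      simp [Ne.symm hq]
    · intro h
      exact absurd (Finset.mem_image_of_mem p ha) h
  rw [h]
  positivity

theorem aux_sinh {A P : Type*} [DecidableEq P] (S : Finset A) (p : A → P) (f Y : A → ℝ)
    (s : ℝ) (hs : 0 ≤ s) :
    0 ≤ ∑ a ∈ S, ∑ b ∈ S,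
      if p a = p b then f a * f b * Real.sinh (s * (Y a * Y b)) else 0 := by
  have h : HasSum (fun n : ℕ => ∑ a ∈ S, ∑ b ∈ S,
      if p a = p b then f a * f b * ((s * (Y a * Y b)) ^ (2 * n + 1) /
        ((2 * n + 1).factorial : ℝ)) else 0)
      (∑ a ∈ S, ∑ b ∈ S,
      if p a = p b then f a * f b * Real.sinh (s * (Y a * Y b)) else 0) := by
    refine hasSum_sum fun a _ => hasSum_sum fun b _ => ?_
    split_ifs
    · exact (Real.hasSum_sinh _).mul_left _
    · exact hasSum_zero
  refine h.nonneg fun n => ?_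
  have := aux_class_sq S p (fun a => f a * Y a ^ (2 * n + 1))
  have h2 : 0 ≤ s ^ (2 * n + 1) / ((2 * n + 1).factorial : ℝ) := by positivity
  refine (mul_nonneg h2 this).trans_eq ?_
  rw [Finset.mul_sum]
  refine Finset.sum_congr rfl fun a _ => ?_
  rw [Finset.mul_sum]
  refine Finset.sum_congr rfl fun b _ => ?_
  split_ifs
  · rw [mul_pow, mul_pow]; ring
  · simp

theorem aux_prod_nonneg {A : Type*} (h : A × A → ℝ) (a : ℝ) (hh : HasSum h a)
    (hS : ∀ S : Finset A, 0 ≤ ∑ x ∈ S, ∑ y ∈ S, h (x, y)) : 0 ≤ a := by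
  have ht : Filter.Tendsto (fun S : Finset A => S ×ˢ S) Filter.atTop Filter.atTop := by
    classical
    refine Filter.tendsto_atTop.2 fun T => ?_
    filter_upwards [Filter.eventually_ge_atTop (T.image Prod.fst ∪ T.image Prod.snd)] with S hS
    intro q hq
    rw [Finset.mem_product]
    exact ⟨hS (Finset.mem_union_left _ (Finset.mem_image_of_mem _ hq)),
      hS (Finset.mem_union_right _ (Finset.mem_image_of_mem _ hq))⟩
  have h1 : Filter.Tendsto (fun T : Finset (A × A) => ∑ q ∈ T, h q) Filter.atTop (nhds a) := hh
  refine ge_of_tendsto' (h1.comp ht) fun S => ?_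
  simpa [Finset.sum_product] using hS S

theorem aux_core {V : Type*} [Fintype V] (W W' X Y : (V → ℤ) → ℝ) (t : ℝ) (ht : 0 ≤ t)
    (hW0 : ∀ φ, 0 ≤ W φ)
    (hW : ∀ φ ψ, W φ * W ψ = W' (φ + ψ) * W' (φ - ψ))
    (hXa : ∀ φ ψ, X (φ + ψ) = X φ + X ψ) (hXs : ∀ φ ψ, X (φ - ψ) = X φ - X ψ)
    (hYa : ∀ φ ψ, Y (φ + ψ) = Y φ + Y ψ) (hYs : ∀ φ ψ, Y (φ - ψ) = Y φ - Y ψ)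
    (s1 : Summable W) (s2 : Summable fun φ => X φ ^ 2 * W φ) :
    (∑' φ, X φ ^ 2 * (W φ * Real.exp (-(t * Y φ ^ 2)))) * (∑' φ, W φ) ≤
      (∑' φ, X φ ^ 2 * W φ) * (∑' φ, W φ * Real.exp (-(t * Y φ ^ 2))) := by
  classical
  set w2 : (V → ℤ) → ℝ := fun φ => W φ * Real.exp (-(t * Y φ ^ 2)) with hw2
  have hw20 : ∀ φ, 0 ≤ w2 φ := fun φ => mul_nonneg (hW0 φ) (Real.exp_nonneg _)
  have hle : ∀ φ, w2 φ ≤ W φ := fun φ =>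
    mul_le_of_le_one_right (hW0 φ) (Real.exp_le_one_iff.2 (by
      have : 0 ≤ t * Y φ ^ 2 := by positivity
      linarith))
  have s3 : Summable w2 := Summable.of_nonneg_of_le hw20 hle s1
  have s4 : Summable fun φ => X φ ^ 2 * w2 φ :=
    Summable.of_nonneg_of_le (fun φ => mul_nonneg (sq_nonneg _) (hw20 φ))
      (fun φ => mul_le_mul_of_nonneg_left (hle φ) (sq_nonneg _)) s2
  have key : ∀ f g : (V → ℤ) → ℝ, Summable f → Summable g →
      HasSum (fun q : (V → ℤ) × (V → ℤ) => f q.1 * g q.2) ((∑' φ, f φ) * ∑' φ, g φ) :=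
    fun f g hf hg => by
      rw [tsum_mul_tsum_of_summable_norm hf.norm hg.norm]
      exact (summable_mul_of_summable_norm hf.norm hg.norm).hasSum
  have H := (((key _ _ s2 s3).sub (key _ _ s4 s1)).sub (key _ _ s1 s4)).add (key _ _ s3 s2)
  let f : (V → ℤ) → ℝ := fun α => W' α * X α * Real.exp (-(t * Y α ^ 2 / 4))
  let p : (V → ℤ) → (V → ZMod 2) := fun α v => (α v : ZMod 2)
  let h : (V → ℤ) × (V → ℤ) → ℝ := fun q =>
    if p q.1 = p q.2 then f q.1 * f q.2 * Real.sinh (t / 2 * (Y q.1 * Y q.2)) else 0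
  let e : (V → ℤ) × (V → ℤ) → (V → ℤ) × (V → ℤ) := fun q => (q.1 + q.2, q.1 - q.2)
  have he : Function.Injective e := by
    rintro ⟨a, b⟩ ⟨a', b'⟩ hq
    simp only [e, Prod.mk.injEq] at hq
    obtain ⟨h1, h2⟩ := hq
    have h1' := fun v => congrFun h1 v
    have h2' := fun v => congrFun h2 v
    simp only [Pi.add_apply, Pi.sub_apply] at h1' h2'
    ext v
    · have := h1' v; have := h2' v; simp only; omega
    · have := h1' v; have := h2' v; simp only; omega
  have hrange : ∀ q, q ∉ Set.range e → h q = 0 := by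
    rintro ⟨a, b⟩ hq
    simp only [h]
    rw [if_neg]
    intro hp
    apply hq
    have hd : ∀ v, (2 : ℤ) ∣ b v - a v := fun v => by
      have := congrFun hp v
      exact (ZMod.intCast_eq_intCast_iff_dvd_sub _ _ 2).1 this
    refine ⟨(fun v => (a v + b v) / 2, fun v => (a v - b v) / 2), ?_⟩
    simp only [e, Prod.mk.injEq]
    constructor
    · ext v; have := hd v; simp only [Pi.add_apply]; omega
    · ext v; have := hd v; simp only [Pi.sub_apply]; omega
  have hcomp : ∀ q : (V → ℤ) × (V → ℤ), 2 * h (e q) =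
      X q.1 ^ 2 * W q.1 * w2 q.2 - X q.1 ^ 2 * w2 q.1 * W q.2 - W q.1 * (X q.2 ^ 2 * w2 q.2)
        + w2 q.1 * (X q.2 ^ 2 * W q.2) := by
    rintro ⟨φ, ψ⟩
    have hp : p (φ + ψ) = p (φ - ψ) := by
      ext v
      refine (ZMod.intCast_eq_intCast_iff_dvd_sub _ _ 2).2 ?_
      simp only [Pi.add_apply, Pi.sub_apply]
      push_cast
      omega
    simp only [h, e, hp, if_true, f, hw2]
    have e1 : Real.exp (-(t * Y (φ + ψ) ^ 2 / 4)) * Real.exp (-(t * Y (φ - ψ) ^ 2 / 4))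
        * (2 * Real.sinh (t / 2 * (Y (φ + ψ) * Y (φ - ψ)))) =
        Real.exp (-(t * Y ψ ^ 2)) - Real.exp (-(t * Y φ ^ 2)) := by
      rw [Real.sinh_eq, mul_div_cancel₀ _ (two_ne_zero), mul_sub, ← Real.exp_add, ← Real.exp_add,
        ← Real.exp_add, hYa, hYs]
      congr 2 <;> ring
    calc _ = (W' (φ + ψ) * W' (φ - ψ)) * (X (φ + ψ) * X (φ - ψ)) *
          (Real.exp (-(t * Y (φ + ψ) ^ 2 / 4)) * Real.exp (-(t * Y (φ - ψ) ^ 2 / 4))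
        * (2 * Real.sinh (t / 2 * (Y (φ + ψ) * Y (φ - ψ))))) := by ring
      _ = _ := by rw [e1, ← hW, hXa, hXs]; ring
  have H2 := H.mul_left (1/2)
  have H3 : HasSum (h ∘ e) _ := H2.congr_fun (fun q => by
    have := hcomp q
    simp only [Function.comp]
    linarith)
  have H4 := (he.hasSum_iff hrange).1 H3
  have := aux_prod_nonneg h _ H4 (fun S => aux_sinh S p f Y (t / 2) (by positivity))
  nlinarith [this]

theorem aux_summable_int (ε : ℝ) (hε : 0 < ε) :
    Summable fun n : ℤ => Real.exp (-(ε * (n : ℝ) ^ 2)) := by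
  have hn : Summable fun n : ℕ => Real.exp (-(ε * (n : ℝ) ^ 2)) := by
    refine Summable.of_nonneg_of_le (fun _ => Real.exp_nonneg _) (fun n => ?_)
      (Real.summable_exp_nat_mul_iff.2 (neg_lt_zero.2 hε))
    apply Real.exp_le_exp.2
    have h1 : (n : ℝ) ≤ (n : ℝ) ^ 2 := by
      exact_mod_cast Nat.le_self_pow two_ne_zero n
    nlinarith
  refine Summable.of_nat_of_neg ?_ ?_
  · simpa using hn
  · simpa using hn

theorem aux_summable_pi {V : Type*} [Fintype V] (g : ℤ → ℝ) (hg0 : ∀ n, 0 ≤ g n)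
    (hg : Summable g) : Summable fun φ : V → ℤ => ∏ v, g (φ v) := by
  classical
  refine summable_of_sum_le (c := ∏ _v : V, ∑' n, g n)
    (fun φ => Finset.prod_nonneg fun v _ => hg0 _) fun S => ?_
  calc ∑ φ ∈ S, ∏ v, g (φ v)
      ≤ ∑ φ ∈ Fintype.piFinset (fun v => S.image fun φ => φ v), ∏ v, g (φ v) := by
        refine Finset.sum_le_sum_of_subset_of_nonneg (fun φ hφ => ?_)
          (fun φ _ _ => Finset.prod_nonneg fun v _ => hg0 _)
        rw [Fintype.mem_piFinset]
        exact fun v => Finset.mem_image_of_mem (fun φ : V → ℤ => φ v) hφ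
    _ = ∏ v, ∑ n ∈ S.image (fun φ => φ v), g n :=
        by rw [Finset.prod_univ_sum]
    _ ≤ _ := Finset.prod_le_prod (fun v _ => Finset.sum_nonneg fun n _ => hg0 n)
        (fun v _ => Summable.sum_le_tsum (f := g) _ (fun n _ => hg0 n) hg)

noncomputable def auxE {V : Type*} [Fintype V] (c : V → V → ℝ) (φ : V → ℤ) : ℝ :=
  (1 : ℝ) / 2 * ∑ i : V, ∑ j : V, c i j * ((φ i - φ j : ℤ) : ℝ) ^ 2

theorem aux_weight {V : Type*} [Fintype V] (c : V → V → ℝ) (φ : V → ℤ) :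
    gffWeight c φ = Real.exp (-auxE c φ) := rfl

theorem auxE_nonneg {V : Type*} [Fintype V] (c : V → V → ℝ) (hnn : ∀ i j, 0 ≤ c i j)
    (φ : V → ℤ) : 0 ≤ auxE c φ := by
  unfold auxE
  have : 0 ≤ ∑ i : V, ∑ j : V, c i j * ((φ i - φ j : ℤ) : ℝ) ^ 2 :=
    Finset.sum_nonneg fun i _ => Finset.sum_nonneg fun j _ => mul_nonneg (hnn i j) (sq_nonneg _)
  positivity

theorem auxE_term {V : Type*} [Fintype V] (c : V → V → ℝ) (hnn : ∀ i j, 0 ≤ c i j)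
    (φ : V → ℤ) (a b : V) : c a b * ((φ a - φ b : ℤ) : ℝ) ^ 2 ≤ 2 * auxE c φ := by
  unfold auxE
  have h0 : ∀ i j, 0 ≤ c i j * ((φ i - φ j : ℤ) : ℝ) ^ 2 :=
    fun i j => mul_nonneg (hnn i j) (sq_nonneg _)
  have h1 := Finset.single_le_sum (f := fun j => c a j * ((φ a - φ j : ℤ) : ℝ) ^ 2)
    (fun j _ => h0 a j) (Finset.mem_univ b)
  have h2 := Finset.single_le_sum (f := fun i => ∑ j, c i j * ((φ i - φ j : ℤ) : ℝ) ^ 2)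
    (fun i _ => Finset.sum_nonneg fun j _ => h0 i j) (Finset.mem_univ a)
  linarith

theorem aux_adj_bound {V : Type*} [Fintype V] (c : V → V → ℝ) (hnn : ∀ i j, 0 ≤ c i j)
    (a b : V) (hab : (supportGraph c).Adj a b) :
    ∃ M : ℝ, 0 ≤ M ∧ ∀ φ : V → ℤ, ((φ a - φ b : ℤ) : ℝ) ^ 2 ≤ M * auxE c φ := by
  have key : ∀ a b, 0 < c a b →
      ∃ M : ℝ, 0 ≤ M ∧ ∀ φ : V → ℤ, ((φ a - φ b : ℤ) : ℝ) ^ 2 ≤ M * auxE c φ := by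
    intro a b h
    refine ⟨2 / c a b, by positivity, fun φ => ?_⟩
    have := auxE_term c hnn φ a b
    rw [div_mul_eq_mul_div, le_div_iff₀ h]
    linarith
  rw [supportGraph, SimpleGraph.fromRel_adj] at hab
  rcases hab.2 with h | h
  · exact key a b h
  · obtain ⟨M, h0, hM⟩ := key b a h
    refine ⟨M, h0, fun φ => ?_⟩
    have := hM φ
    push_cast at this ⊢
    linarith [this, sq_nonneg ((φ a : ℝ) - φ b), (by ring : ((φ a : ℝ) - φ b) ^ 2 = ((φ b : ℝ) - φ a) ^ 2)]

theorem aux_reach_bound {V : Type*} [Fintype V] (c : V → V → ℝ) (hnn : ∀ i j, 0 ≤ c i j)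
    (x v : V) (h : (supportGraph c).Reachable x v) :
    ∃ M : ℝ, 0 ≤ M ∧ ∀ φ : V → ℤ, φ x = 0 → (φ v : ℝ) ^ 2 ≤ M * auxE c φ := by
  rw [SimpleGraph.reachable_iff_reflTransGen] at h
  induction h with
  | refl => exact ⟨0, le_rfl, fun φ h => by simp [h]⟩
  | tail _ hab ih =>
    rename_i a b _
    obtain ⟨M, h0, hM⟩ := ih
    obtain ⟨M', h0', hM'⟩ := aux_adj_bound c hnn _ _ hab
    refine ⟨2 * M + 2 * M', by positivity, fun φ h => ?_⟩
    have h1 := hM φ h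
    have h2 := hM' φ
    push_cast at h2
    nlinarith [sq_nonneg ((φ a : ℝ) + ((φ a : ℝ) - φ b))]

noncomputable def auxW {V : Type*} [Fintype V] [DecidableEq V] (c : V → V → ℝ) (x : V)
    (φ : V → ℤ) : ℝ := if φ x = 0 then gffWeight c φ else 0

theorem auxW_nonneg {V : Type*} [Fintype V] [DecidableEq V] (c : V → V → ℝ) (x : V)
    (φ : V → ℤ) : 0 ≤ auxW c x φ := by
  unfold auxW
  split_ifs
  · exact Real.exp_nonneg _
  · exact le_rfl

theorem aux_coercive {V : Type*} [Fintype V] (c : V → V → ℝ) (hnn : ∀ i j, 0 ≤ c i j)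
    (x : V) (hr : ∀ v, (supportGraph c).Reachable x v) :
    ∃ M : ℝ, 0 < M ∧ ∀ φ : V → ℤ, φ x = 0 → ∑ v, (φ v : ℝ) ^ 2 ≤ M * auxE c φ := by
  choose M h0 hM using fun v => aux_reach_bound c hnn x v (hr v)
  have hs : 0 ≤ ∑ v, M v := Finset.sum_nonneg fun v _ => h0 v
  refine ⟨∑ v, M v + 1, by positivity, fun φ h => ?_⟩
  calc ∑ v, (φ v : ℝ) ^ 2 ≤ ∑ v, M v * auxE c φ := Finset.sum_le_sum fun v _ => hM v φ h
    _ = (∑ v, M v) * auxE c φ := by rw [Finset.sum_mul]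
    _ ≤ _ := mul_le_mul_of_nonneg_right (by linarith) (auxE_nonneg c hnn φ)

theorem aux_summable {V : Type*} [Fintype V] [DecidableEq V] (c : V → V → ℝ)
    (hnn : ∀ i j, 0 ≤ c i j)
    (x : V) (hr : ∀ v, (supportGraph c).Reachable x v) (i j : V) :
    Summable (auxW c x) ∧ Summable fun φ => ((φ i : ℝ) - φ j) ^ 2 * auxW c x φ := by
  obtain ⟨M, hM0, hM⟩ := aux_coercive c hnn x hr
  have hS := aux_summable_pi (V := V) _ (fun n => Real.exp_nonneg _)
    (aux_summable_int (1 / (2 * M)) (by positivity))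
  have hS' : Summable fun φ : V → ℤ => Real.exp (-(1 / (2 * M) * ∑ v, (φ v : ℝ) ^ 2)) := by
    refine hS.congr fun φ => ?_
    rw [← Real.exp_sum, Finset.sum_neg_distrib, Finset.mul_sum]
  have hb : ∀ φ : V → ℤ, φ x = 0 → Real.exp (-(auxE c φ / 2)) ≤
      Real.exp (-(1 / (2 * M) * ∑ v, (φ v : ℝ) ^ 2)) := fun φ h => by
    apply Real.exp_le_exp.2
    have := hM φ h
    rw [neg_le_neg_iff, one_div_mul_eq_div, div_le_div_iff₀ (by positivity) (by positivity)]
    linarith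
  constructor
  · refine Summable.of_nonneg_of_le (auxW_nonneg c x) (fun φ => ?_) hS'
    unfold auxW
    split_ifs with h
    · refine le_trans ?_ (hb φ h)
      rw [aux_weight]
      apply Real.exp_le_exp.2
      linarith [auxE_nonneg c hnn φ]
    · exact Real.exp_nonneg _
  · refine Summable.of_nonneg_of_le (fun φ => mul_nonneg (sq_nonneg _) (auxW_nonneg c x φ))
      (fun φ => ?_) (hS'.mul_left (8 * M))
    unfold auxW
    split_ifs with h
    · have h1 : ∀ v, (φ v : ℝ) ^ 2 ≤ M * auxE c φ := fun v =>
        (Finset.single_le_sum (f := fun v => (φ v : ℝ) ^ 2) (fun v _ => sq_nonneg _)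
          (Finset.mem_univ v)).trans (hM φ h)
      have h2 : ((φ i : ℝ) - φ j) ^ 2 ≤ 4 * M * auxE c φ := by
        nlinarith [h1 i, h1 j, sq_nonneg ((φ i : ℝ) + φ j)]
      have h3 : auxE c φ ≤ 2 * Real.exp (auxE c φ / 2) := by
        have := Real.add_one_le_exp (auxE c φ / 2)
        linarith
      have h4 : ((φ i : ℝ) - φ j) ^ 2 ≤ 8 * M * Real.exp (auxE c φ / 2) := by nlinarith
      calc ((φ i : ℝ) - φ j) ^ 2 * gffWeight c φ
          ≤ 8 * M * Real.exp (auxE c φ / 2) * gffWeight c φ :=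
            mul_le_mul_of_nonneg_right h4 (Real.exp_nonneg _)
        _ = 8 * M * Real.exp (-(auxE c φ / 2)) := by
            rw [aux_weight, mul_assoc, ← Real.exp_add]; congr 2; ring
        _ ≤ _ := mul_le_mul_of_nonneg_left (hb φ h) (by positivity)
    · rw [mul_zero]; positivity

theorem aux_tsum_config {V : Type*} [Fintype V] [DecidableEq V] (c : V → V → ℝ)
    (x : V) (hr : ∀ v, (supportGraph c).Reachable x v) (F : (V → ℤ) → ℝ) :
    ∑' φ : GffConfig c x, F φ.val * gffWeight c φ.val = ∑' φ, F φ * auxW c x φ := by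
  have hinj : Function.Injective (fun φ : GffConfig c x => φ.val) := Subtype.val_injective
  have := hinj.tsum_eq (f := fun φ => F φ * auxW c x φ) (by
    intro φ hφ
    by_cases h : φ x = 0
    · exact ⟨⟨φ, h, fun v hv => absurd (hr v) hv⟩, rfl⟩
    · simp [auxW, h] at hφ)
  rw [← this]
  refine tsum_congr fun φ => ?_
  rw [auxW, if_pos φ.2.1]

theorem aux_summable_config {V : Type*} [Fintype V] [DecidableEq V] (c : V → V → ℝ)
    (x : V) (F : (V → ℤ) → ℝ) (h : Summable fun φ => F φ * auxW c x φ) :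
    Summable fun φ : GffConfig c x => F φ.val * gffWeight c φ.val := by
  have hinj : Function.Injective (fun φ : GffConfig c x => φ.val) := Subtype.val_injective
  refine (h.comp_injective hinj).congr fun φ => ?_
  simp only [Function.comp]
  rw [auxW, if_pos φ.2.1]

theorem auxE_neg {V : Type*} [Fintype V] (c : V → V → ℝ) (φ : V → ℤ) :
    auxE c (-φ) = auxE c φ := by
  unfold auxE
  congr 1
  refine Finset.sum_congr rfl fun i _ => Finset.sum_congr rfl fun j _ => ?_
  simp only [Pi.neg_apply]
  push_cast
  ring

theorem aux_rvar {V : Type*} [Fintype V] (c : V → V → ℝ) (x i j : V) :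
    gffRVar c x (fun φ => ((φ i : ℤ) : ℝ) - ((φ j : ℤ) : ℝ)) =
      (∑' φ : GffConfig c x, ((φ.val i : ℝ) - φ.val j) ^ 2 * gffWeight c φ.val) / gffZ c x := by
  let e : GffConfig c x ≃ GffConfig c x :=
    { toFun := fun φ => ⟨-φ.val, by simp [φ.2.1], fun v hv => by simp [φ.2.2 v hv]⟩
      invFun := fun φ => ⟨-φ.val, by simp [φ.2.1], fun v hv => by simp [φ.2.2 v hv]⟩
      left_inv := fun φ => Subtype.ext (neg_neg _)
      right_inv := fun φ => Subtype.ext (neg_neg _) }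
  have h := e.tsum_eq (fun φ : GffConfig c x =>
    ((φ.val i : ℝ) - φ.val j) * gffWeight c φ.val)
  have h2 : ∀ φ : GffConfig c x, (((e φ).val i : ℝ) - (e φ).val j) * gffWeight c (e φ).val
      = -(((φ.val i : ℝ) - φ.val j) * gffWeight c φ.val) := fun φ => by
    have h0 : (e φ).val = -φ.val := rfl
    rw [h0]
    simp only [Pi.neg_apply, aux_weight, auxE_neg]
    push_cast
    ring
  simp only [h2, tsum_neg] at h
  have h3 : ∑' φ : GffConfig c x, ((φ.val i : ℝ) - φ.val j) * gffWeight c φ.val = 0 := by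
    linarith
  unfold gffRVar
  simp only [h3]
  simp

theorem aux_var1 {V : Type*} [Fintype V] (c : V → V → ℝ) (x i : V) :
    gffVar1 c x i = gffVar2 c x i x := by
  unfold gffVar1 gffVar2
  have : gffRVar c x (fun φ => ((φ i : ℤ) : ℝ)) =
      gffRVar c x (fun φ => ((φ i : ℤ) : ℝ) - ((φ x : ℤ) : ℝ)) := by
    unfold gffRVar
    have : ∀ φ : GffConfig c x, ((φ.val x : ℤ) : ℝ) = 0 := fun φ => by
      exact_mod_cast φ.2.1
    simp only [this, sub_zero]
  rw [this]
  have hx : (supportGraph c).Reachable x x := SimpleGraph.Reachable.refl _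
  by_cases h : (supportGraph c).Reachable x i
  · rw [if_pos h, if_pos ⟨h, hx⟩]
  · rw [if_neg h, if_neg (fun h' => h h'.1)]

theorem auxE_delete {V : Type*} [Fintype V] [DecidableEq V] (c : V → V → ℝ)
    (hsym : ∀ i j, c i j = c j i) (y z : V) (hyz : y ≠ z) (φ : V → ℤ) :
    auxE c φ = auxE (deleteEdge c y z) φ + c y z * ((φ y : ℝ) - φ z) ^ 2 := by
  have h : ∀ i j, c i j * ((φ i - φ j : ℤ) : ℝ) ^ 2 =
      deleteEdge c y z i j * ((φ i - φ j : ℤ) : ℝ) ^ 2 +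
      ((if i = y then (if j = z then c y z * ((φ y : ℝ) - φ z) ^ 2 else 0) else 0) +
      (if i = z then (if j = y then c y z * ((φ y : ℝ) - φ z) ^ 2 else 0) else 0)) := by
    intro i j
    unfold deleteEdge
    by_cases h1 : i = y
    · subst h1
      by_cases h2 : j = z
      · subst h2
        simp [hyz]
      · simp [h2, hyz]
    · by_cases h2 : i = z
      · subst h2
        by_cases h3 : j = y
        · subst h3
          simp [h1, hsym i j]
          left
          ring
        · simp [h3, h1]
      · simp [h1, h2]
  unfold auxE
  simp_rw [h, Finset.sum_add_distrib]
  simp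
  ring

theorem auxE_par {V : Type*} [Fintype V] (c : V → V → ℝ) (φ ψ : V → ℤ) :
    auxE c (φ + ψ) + auxE c (φ - ψ) = 2 * (auxE c φ + auxE c ψ) := by
  unfold auxE
  simp only [Finset.mul_sum, ← Finset.sum_add_distrib]
  refine Finset.sum_congr rfl fun i _ => Finset.sum_congr rfl fun j _ => ?_
  simp only [Pi.add_apply, Pi.sub_apply]
  push_cast
  ring

theorem aux_Z_pos {V : Type*} [Fintype V] [DecidableEq V] (c : V → V → ℝ)
    (x : V) (h : Summable (auxW c x)) : 0 < ∑' φ, auxW c x φ :=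
  h.tsum_pos (auxW_nonneg c x) 0 (by simp [auxW, aux_weight, Real.exp_pos])

theorem aux_case_conn {V : Type*} [Fintype V] [DecidableEq V] (x : V) (c : V → V → ℝ)
    (hsym : ∀ i j, c i j = c j i) (hnn : ∀ i j, 0 ≤ c i j)
    (hr : ∀ v, (supportGraph c).Reachable x v)
    (y z : V) (hyz : y ≠ z)
    (hr' : ∀ v, (supportGraph (deleteEdge c y z)).Reachable x v) (i j : V) :
    gffRVar c x (fun φ => ((φ i : ℤ) : ℝ) - ((φ j : ℤ) : ℝ)) ≤
    gffRVar (deleteEdge c y z) x (fun φ => ((φ i : ℤ) : ℝ) - ((φ j : ℤ) : ℝ)) := by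
  have hnn' : ∀ i j, 0 ≤ deleteEdge c y z i j := fun i j => by
    unfold deleteEdge; split_ifs; exacts [le_rfl, hnn i j]
  obtain ⟨s1, s2⟩ := aux_summable _ hnn' x hr' i j
  have s0 := (aux_summable c hnn x hr i j).1
  have hw : ∀ φ : V → ℤ, auxW c x φ = auxW (deleteEdge c y z) x φ *
      Real.exp (-(c y z * ((φ y : ℝ) - φ z) ^ 2)) := fun φ => by
    unfold auxW
    split_ifs
    · rw [aux_weight, aux_weight, ← Real.exp_add, auxE_delete c hsym y z hyz]
      congr 1; ring
    · simp
  have core := aux_core (auxW (deleteEdge c y z) x)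
    (fun α => if α x = 0 then Real.exp (-(auxE (deleteEdge c y z) α / 2)) else 0)
    (fun φ => (φ i : ℝ) - φ j) (fun φ => (φ y : ℝ) - φ z) (c y z) (hnn y z)
    (auxW_nonneg _ x) (fun φ ψ => by
      have hp := auxE_par (deleteEdge c y z) φ ψ
      unfold auxW
      simp only [Pi.add_apply, Pi.sub_apply, aux_weight]
      by_cases h1 : φ x = 0
      · by_cases h2 : ψ x = 0
        · simp only [h1, h2, if_true, add_zero, sub_zero]
          rw [← Real.exp_add, ← Real.exp_add]
          congr 1; linarith
        · simp [h1, h2]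
      · have : ¬ (φ x + ψ x = 0 ∧ φ x - ψ x = 0) := by omega
        by_cases h3 : φ x + ψ x = 0
        · have h4 : ¬ (φ x - ψ x = 0) := fun h => this ⟨h3, h⟩
          rw [if_neg h1, if_neg h4]; simp
        · rw [if_neg h1, if_neg h3]; simp)
    (fun φ ψ => by simp only [Pi.add_apply]; push_cast; ring)
    (fun φ ψ => by simp only [Pi.sub_apply]; push_cast; ring)
    (fun φ ψ => by simp only [Pi.add_apply]; push_cast; ring)
    (fun φ ψ => by simp only [Pi.sub_apply]; push_cast; ring) s1 s2
  simp only [← hw] at core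
  have hZ : ∀ c' : V → V → ℝ, (∀ v, (supportGraph c').Reachable x v) →
      gffZ c' x = ∑' φ, auxW c' x φ := fun c' h => by
    have := aux_tsum_config c' x h (fun _ => 1)
    simpa [gffZ] using this
  rw [aux_rvar, aux_rvar, hZ c hr, hZ _ hr',
    aux_tsum_config c x hr (fun φ => ((φ i : ℝ) - φ j) ^ 2),
    aux_tsum_config _ x hr' (fun φ => ((φ i : ℝ) - φ j) ^ 2),
    div_le_div_iff₀ (aux_Z_pos c x s0) (aux_Z_pos _ x s1)]
  exact core

theorem aux_adj_delete {V : Type*} [DecidableEq V] (c : V → V → ℝ)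
    (y z a b : V) (h : (supportGraph c).Adj a b) :
    (supportGraph (deleteEdge c y z)).Adj a b ∨ (a = y ∧ b = z) ∨ (a = z ∧ b = y) := by
  by_cases h1 : (a = y ∧ b = z) ∨ (a = z ∧ b = y)
  · exact Or.inr h1
  · left
    have h2 : ¬ ((b = y ∧ a = z) ∨ (b = z ∧ a = y)) := by tauto
    unfold supportGraph at h ⊢
    rw [SimpleGraph.fromRel_adj] at h ⊢
    simpa [deleteEdge, h1, h2] using h

theorem aux_all_reach {V : Type*} [DecidableEq V] (c : V → V → ℝ) (x : V)
    (hr : ∀ v, (supportGraph c).Reachable x v) (y z : V)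
    (h : (supportGraph (deleteEdge c y z)).Reachable x y ↔
      (supportGraph (deleteEdge c y z)).Reachable x z) (v : V) :
    (supportGraph (deleteEdge c y z)).Reachable x v := by
  have h1 := hr v
  rw [SimpleGraph.reachable_iff_reflTransGen] at h1
  induction h1 with
  | refl => exact SimpleGraph.Reachable.refl _
  | tail _ hab ih =>
    rcases aux_adj_delete c y z _ _ hab with h2 | ⟨rfl, rfl⟩ | ⟨rfl, rfl⟩
    · exact ih.trans h2.reachable
    · exact h.1 ih
    · exact h.2 ih

theorem aux_cut {V : Type*} [DecidableEq V] (c : V → V → ℝ) (hnn : ∀ i j, 0 ≤ c i j) (x : V)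
    (y z a b : V) (ha : (supportGraph (deleteEdge c y z)).Reachable x a)
    (hb : ¬ (supportGraph (deleteEdge c y z)).Reachable x b) :
    (c a b = 0 ∧ c b a = 0) ∨ (a = y ∧ b = z) ∨ (a = z ∧ b = y) := by
  have hne : a ≠ b := fun h => hb (h ▸ ha)
  by_cases h : (supportGraph c).Adj a b
  · rcases aux_adj_delete c y z a b h with h | h
    · exact absurd (ha.trans h.reachable) hb
    · exact Or.inr h
  · left
    unfold supportGraph at h
    rw [SimpleGraph.fromRel_adj] at h
    push Not at h
    obtain ⟨h1, h2⟩ := h hne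
    exact ⟨le_antisymm h1 (hnn _ _), le_antisymm h2 (hnn _ _)⟩

open scoped Classical in
theorem aux_case_bridge {V : Type*} [Fintype V] [DecidableEq V] (x : V) (c : V → V → ℝ)
    (hnn : ∀ i j, 0 ≤ c i j)
    (hr : ∀ v, (supportGraph c).Reachable x v)
    (y z : V)
    (hy : (supportGraph (deleteEdge c y z)).Reachable x y)
    (hz : ¬ (supportGraph (deleteEdge c y z)).Reachable x z) (i j : V)
    (hi : (supportGraph (deleteEdge c y z)).Reachable x i)
    (hj : (supportGraph (deleteEdge c y z)).Reachable x j) :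
    gffRVar c x (fun φ => ((φ i : ℤ) : ℝ) - ((φ j : ℤ) : ℝ)) =
    gffRVar (deleteEdge c y z) x (fun φ => ((φ i : ℤ) : ℝ) - ((φ j : ℤ) : ℝ)) := by
  set d := deleteEdge c y z with hd
  set R : V → Prop := fun v => (supportGraph d).Reachable x v with hR
  have hx : R x := SimpleGraph.Reachable.refl _
  let M := {b : V → ℤ // ∀ v, R v → b v = 0}
  let e : GffConfig d x × M ≃ GffConfig c x :=
    { toFun := fun q => ⟨fun v => if R v then q.1.val v else q.2.val v + q.1.val y, by
          simp [hx, q.1.2.1], fun v hv => absurd (hr v) hv⟩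
      invFun := fun φ => (⟨fun v => if R v then φ.val v else 0, by simp [φ.2.1],
          fun v hv => if_neg hv⟩, ⟨fun v => if R v then 0 else φ.val v - φ.val y,
          fun v hv => if_pos hv⟩)
      left_inv := by
        rintro ⟨⟨a, ha⟩, ⟨b, hb⟩⟩
        refine Prod.ext (Subtype.ext (funext fun v => ?_)) (Subtype.ext (funext fun v => ?_))
        · by_cases h : R v
          · simp [h]
          · simp [h, ha.2 v h]
        · have hy' : R y := hy
          by_cases h : R v
          · simp [h, hb v h]
          · simp [h, hy']
      right_inv := by
        rintro ⟨φ, hφ⟩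
        refine Subtype.ext (funext fun v => ?_)
        have hy' : R y := hy
        by_cases h : R v
        · simp [h]
        · simp [h, hy'] }
  have hev : ∀ (q : GffConfig d x × M) (v : V),
      (e q).val v = if R v then q.1.val v else q.2.val v + q.1.val y := fun _ _ => rfl
  have hwe : ∀ q : GffConfig d x × M,
      gffWeight c (e q).val = gffWeight d q.1.val * gffWeight c q.2.val := by
    rintro ⟨⟨a, ha⟩, ⟨b, hb⟩⟩
    rw [aux_weight, aux_weight, aux_weight, ← Real.exp_add, ← neg_add]
    congr 2
    unfold auxE
    rw [← mul_add]
    congr 1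
    rw [← Finset.sum_add_distrib]
    refine Finset.sum_congr rfl fun k _ => ?_
    rw [← Finset.sum_add_distrib]
    refine Finset.sum_congr rfl fun l _ => ?_
    simp only [hev]
    have hyR : R y := hy
    have hzR : ¬ R z := hz
    by_cases hk : R k
    · by_cases hl : R l
      · have : d k l = c k l := by
          rw [hd]; unfold deleteEdge; rw [if_neg]
          rintro (⟨rfl, rfl⟩ | ⟨rfl, rfl⟩)
          · exact hz hl
          · exact hz hk
        simp [hk, hl, hb k hk, hb l hl, this]
      · rcases aux_cut c hnn x y z k l hk hl with h | ⟨rfl, rfl⟩ | ⟨rfl, rfl⟩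
        · have : d k l = 0 := by
            rw [hd]; unfold deleteEdge; split_ifs; exacts [rfl, h.1]
          simp [h.1, this]
        · have : d k l = 0 := by rw [hd]; unfold deleteEdge; simp
          simp [this, hk, hl, hb k hk]
        · exact absurd hk hz
    · by_cases hl : R l
      · rcases aux_cut c hnn x y z l k hl hk with h | ⟨rfl, rfl⟩ | ⟨rfl, rfl⟩
        · have : d k l = 0 := by
            rw [hd]; unfold deleteEdge; split_ifs; exacts [rfl, h.2]
          simp [h.2, this]
        · have : d k l = 0 := by rw [hd]; unfold deleteEdge; simp
          simp [this, hk, hl, hb l hl]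
        · exact absurd hl hz
      · have : d k l = c k l := by
          rw [hd]; unfold deleteEdge; rw [if_neg]
          rintro (⟨rfl, rfl⟩ | ⟨rfl, rfl⟩)
          · exact hk hy
          · exact hl hy
        simp [hk, hl, ha.2 k hk, ha.2 l hl]
  let a0 : GffConfig d x := ⟨0, rfl, fun _ _ => rfl⟩
  let b0 : M := ⟨0, fun _ _ => rfl⟩
  have hw0 : ∀ c' : V → V → ℝ, gffWeight c' 0 = 1 := fun c' => by
    simp [gffWeight]
  obtain ⟨s1, s2⟩ := aux_summable c hnn x hr i j
  have S1 := aux_summable_config c x (fun _ => 1) (by simpa using s1)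
  have S2 := aux_summable_config c x (fun φ => ((φ i : ℝ) - φ j) ^ 2) s2
  have S1' := (e.summable_iff).2 S1
  have S2' := (e.summable_iff).2 S2
  have hXe : ∀ q : GffConfig d x × M, (((e q).val i : ℝ) - (e q).val j) ^ 2 =
      ((q.1.val i : ℝ) - q.1.val j) ^ 2 := fun q => by
    have hi' : R i := hi
    have hj' : R j := hj
    simp [hev, hi', hj']
  simp only [Function.comp_def, hwe, one_mul] at S1'
  simp only [Function.comp_def, hwe, hXe] at S2'
  have T1 : Summable fun b : M => gffWeight c b.val := by
    have := S1'.comp_injective (i := fun b : M => (a0, b)) (fun b b' h => (Prod.ext_iff.1 h).2)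
    refine this.congr fun b => ?_
    simp [a0, hw0]
  have T2 : Summable fun a : GffConfig d x => gffWeight d a.val := by
    have := S1'.comp_injective (i := fun a : GffConfig d x => (a, b0))
      (fun b b' h => (Prod.ext_iff.1 h).1)
    refine this.congr fun b => ?_
    simp [b0, hw0]
  have T3 : Summable fun a : GffConfig d x =>
      ((a.val i : ℝ) - a.val j) ^ 2 * gffWeight d a.val := by
    have := S2'.comp_injective (i := fun a : GffConfig d x => (a, b0))
      (fun b b' h => (Prod.ext_iff.1 h).1)
    refine this.congr fun b => ?_
    simp [b0, hw0]
  have hK : 0 < ∑' b : M, gffWeight c b.val :=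
    T1.tsum_pos (fun b => Real.exp_nonneg _) b0 (Real.exp_pos _)
  have U1 : gffZ c x = gffZ d x * ∑' b : M, gffWeight c b.val := by
    unfold gffZ
    rw [← e.tsum_eq, tsum_mul_tsum_of_summable_norm T2.norm T1.norm]
    exact tsum_congr fun q => hwe q
  have U2 : ∑' φ : GffConfig c x, ((φ.val i : ℝ) - φ.val j) ^ 2 * gffWeight c φ.val =
      (∑' φ : GffConfig d x, ((φ.val i : ℝ) - φ.val j) ^ 2 * gffWeight d φ.val) *
        ∑' b : M, gffWeight c b.val := by
    rw [← e.tsum_eq, tsum_mul_tsum_of_summable_norm T3.norm T1.norm]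
    exact tsum_congr fun q => by rw [hwe q, hXe q, mul_assoc]
  rw [aux_rvar, aux_rvar, U1, U2, mul_div_mul_right _ _ hK.ne']

/-- **Monotonicity under deletion of edges.**
Let `G = (V,E,x)` be a finite connected rooted graph with conductances `c ∈ (0,∞)^E`
(encoded as a symmetric nonnegative function whose support graph is connected), and let
`yz ∈ E` be an edge. Deleting the edge `yz` increases the variance of every height
`φ(i)` and of every height difference `φ(i) − φ(j)` (with the convention that the
variance is `+∞` at vertices disconnected from the root). -/
theorem gff_variance_monotone_edge_deletion
    {V : Type*} [Fintype V] [DecidableEq V] (x : V) (c : V → V → ℝ)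
    (hsym : ∀ i j, c i j = c j i) (hnn : ∀ i j, 0 ≤ c i j)
    (hconn : (supportGraph c).Connected)
    (y z : V) (hyz : y ≠ z) (hedge : 0 < c y z) :
    (∀ i : V, gffVar1 c x i ≤ gffVar1 (deleteEdge c y z) x i) ∧
      (∀ i j : V, gffVar2 c x i j ≤ gffVar2 (deleteEdge c y z) x i j) := by
  have hr : ∀ v, (supportGraph c).Reachable x v := fun v => hconn.preconnected x v
  have main : ∀ i j : V, gffVar2 c x i j ≤ gffVar2 (deleteEdge c y z) x i j := by
    intro i j
    unfold gffVar2
    by_cases h : (supportGraph (deleteEdge c y z)).Reachable x i ∧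
        (supportGraph (deleteEdge c y z)).Reachable x j
    · rw [if_pos h, if_pos ⟨hr i, hr j⟩]
      apply ENNReal.ofReal_le_ofReal
      by_cases hyz' : (supportGraph (deleteEdge c y z)).Reachable x y ↔
        (supportGraph (deleteEdge c y z)).Reachable x z
      · exact aux_case_conn x c hsym hnn hr y z hyz (aux_all_reach c x hr y z hyz') i j
      · by_cases hy : (supportGraph (deleteEdge c y z)).Reachable x y
        · have hz : ¬ (supportGraph (deleteEdge c y z)).Reachable x z := fun hz =>
            hyz' ⟨fun _ => hz, fun _ => hy⟩
          exact (aux_case_bridge x c hnn hr y z hy hz i j h.1 h.2).le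
        · have hz : (supportGraph (deleteEdge c y z)).Reachable x z := by
            by_contra hz
            exact hyz' ⟨fun h => absurd h hy, fun h => absurd h hz⟩
          have hsw : deleteEdge c y z = deleteEdge c z y := by
            funext a b
            unfold deleteEdge
            simp only [or_comm]
          rw [hsw] at hy hz h ⊢
          exact (aux_case_bridge x c hnn hr z y hz hy i j h.1 h.2).le
    · rw [if_neg h]
      exact le_top
  exact ⟨fun i => by rw [aux_var1, aux_var1]; exact main i x, main⟩
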